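/- arXiv:2404.03910 — 2 statements merged into one kernel-verified Lean document; each statement's English description precedes it below -/
import Mathlib

section
/- Suppose Γ has diameter 2, Aᵀ = A_2, and A·𝟙 = k·𝟙 and A_2·𝟙 = k·𝟙 for some positive integer k (𝟙 the all-ones vector). Then there exists a polynomial p with real coefficients such that A_2 = p(A). -/
/-!
Distance two being opposite to distance one, `Γ` is a regular tournament: `I + A + Aᵀ = J`, where
`J` is the all-ones matrix, and `|X| = 2k + 1`. It therefore suffices to write `J` as a real
polynomial in `A`, since then `A₂ = Aᵀ = J - I - A`. This is Hoffman's argument. If `Bv = kv` for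
a real matrix `B` with `I + B + Bᵀ = J`, then `(∑ v)² = vᵀJv = (2k + 1) ∑ v² = |X| ∑ v²`, the
equality case of Cauchy-Schwarz, so `v` is constant (`eigenvector_const`). Factor the minimal
polynomial of `A` as `(X - k) q`. The columns of `q(A)` are eigenvectors of `A` for `k`, and its
rows are eigenvectors of `Aᵀ` for `k`, so `q(A) = cJ`; by minimality `c ≠ 0`.
-/

open Matrix Polynomial BigOperators
open scoped Classical

/-- Distance from `x` to `y` in the digraph with adjacency matrix `A`:
the least `n` with `(A ^ n) x y ≠ 0`. -/
noncomputable def gdist {X : Type*} [Fintype X] (A : Matrix X X ℂ) (x y : X) : ℕ :=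
  sInf {n : ℕ | (A ^ n) x y ≠ 0}

/-- Diameter of the digraph with adjacency matrix `A`. -/
noncomputable def gdiam {X : Type*} [Fintype X] (A : Matrix X X ℂ) : ℕ :=
  Finset.univ.sup fun p : X × X => gdist A p.1 p.2

/-- The distance-`i` matrix of the digraph with adjacency matrix `A`. -/
noncomputable def dmat {X : Type*} [Fintype X] (A : Matrix X X ℂ) (i : ℕ) : Matrix X X ℂ :=
  fun x y => if gdist A x y = i then 1 else 0

/-- The tournament property: of any two distinct vertices, exactly one dominates the other. -/
lemma tournament {X : Type*} [Fintype X] (A : Matrix X X ℂ)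
    (h01 : ∀ x y : X, A x y = 0 ∨ A x y = 1)
    (hconn : ∀ x y : X, ∃ n : ℕ, (A ^ n) x y ≠ 0)
    (hdiam : gdiam A = 2) (htrans : Aᵀ = dmat A 2) (x y : X) (hxy : x ≠ y) :
    A x y + A y x = 1 := by
  have hmem : (A ^ gdist A x y) x y ≠ 0 := Nat.sInf_mem (hconn x y)
  have hle : gdist A x y ≤ 2 := by
    rw [← hdiam]
    exact Finset.le_sup (f := fun p : X × X => gdist A p.1 p.2) (Finset.mem_univ (x, y))
  have h0 : gdist A x y ≠ 0 := by
    intro h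
    rw [h] at hmem
    simp [hxy] at hmem
  have ht : A y x = if gdist A x y = 2 then 1 else 0 := congrFun (congrFun htrans x) y
  rcases h01 x y with h | h
  · have h1 : gdist A x y ≠ 1 := by
      intro h'
      rw [h'] at hmem
      simp [h] at hmem
    have h2 : gdist A x y = 2 := by omega
    rw [ht, h, if_pos h2, zero_add]
  · have h1 : gdist A x y ≤ 1 := Nat.sInf_le (by simp [h])
    rw [ht, h, if_neg (by omega), add_zero]

/-- In a regular tournament on `2k + 1` vertices, the eigenspace for the valency `k` consists of
constant vectors. -/
lemma eigenvector_const {X : Type*} [Fintype X] [DecidableEq X]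
    (B : Matrix X X ℝ) (k : ℝ)
    (hB : ∀ x y, B x y + B y x = 1 - if x = y then 1 else 0)
    (hcard : (Fintype.card X : ℝ) = 2 * k + 1) (v : X → ℝ)
    (hv : ∀ x, ∑ y, B x y * v y = k * v x) (a b : X) : v a = v b := by
  have e1 : ∑ x, ∑ y, v x * v y * B x y = k * ∑ x, v x ^ 2 := by
    rw [Finset.mul_sum]
    refine Finset.sum_congr rfl fun x _ => ?_
    have : ∑ y, v x * v y * B x y = v x * ∑ y, B x y * v y := by
      rw [Finset.mul_sum]
      exact Finset.sum_congr rfl fun y _ => by ring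
    rw [this, hv]
    ring
  have e2 : ∑ x, ∑ y, v x * v y * B y x = k * ∑ x, v x ^ 2 := by
    rw [Finset.sum_comm, ← e1]
    exact Finset.sum_congr rfl fun x _ => Finset.sum_congr rfl fun y _ => by ring
  have e3 : ∑ x, ∑ y, v x * v y * (B x y + B y x) = (∑ x, v x) ^ 2 - ∑ x, v x ^ 2 := by
    simp only [hB, mul_sub, mul_one, Finset.sum_sub_distrib]
    simp [sq, Finset.sum_mul_sum]
  have e4 : ∑ x, ∑ y, (v x - v y) ^ 2
      = 2 * (Fintype.card X : ℝ) * ∑ x, v x ^ 2 - 2 * (∑ x, v x) ^ 2 := by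
    have : ∀ x y, (v x - v y) ^ 2 = v x ^ 2 + v y ^ 2 - 2 * (v x * v y) := fun x y => by ring
    simp only [this, Finset.sum_sub_distrib, Finset.sum_add_distrib, ← Finset.mul_sum,
      Finset.sum_const, Finset.card_univ, nsmul_eq_mul, ← Finset.sum_mul]
    ring
  have e5 : ∑ x, ∑ y, (v x - v y) ^ 2 = 0 := by
    simp only [mul_add, Finset.sum_add_distrib] at e3
    rw [e4, hcard]
    linarith
  have e6 := (Finset.sum_eq_zero_iff_of_nonneg
    (fun x _ => Finset.sum_nonneg fun y _ => sq_nonneg (v x - v y))).1 e5 a (Finset.mem_univ a)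
  have e7 := (Finset.sum_eq_zero_iff_of_nonneg
    (fun y _ => sq_nonneg (v a - v y))).1 e6 b (Finset.mem_univ b)
  exact sub_eq_zero.1 (pow_eq_zero_iff two_ne_zero |>.1 e7)

/-- Hoffman's polynomial: the all-ones matrix is a polynomial in the adjacency matrix of a regular
tournament. -/
lemma hoffman {X : Type*} [Fintype X] [DecidableEq X] [Nonempty X] (B : Matrix X X ℝ) (k : ℝ)
    (hB : ∀ x y, B x y + B y x = 1 - if x = y then 1 else 0)
    (hcard : (Fintype.card X : ℝ) = 2 * k + 1)
    (hrow : B *ᵥ (fun _ => 1) = fun _ => k) :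
    ∃ p : ℝ[X], aeval B p = Matrix.of fun _ _ => 1 := by
  have hBint : IsIntegral ℝ B := Algebra.IsIntegral.isIntegral B
  have hroot : (minpoly ℝ B).IsRoot k := by
    rw [← Matrix.minpoly_toLin']
    apply Module.End.isRoot_of_hasEigenvalue
    refine Module.End.hasEigenvalue_of_hasEigenvector (x := fun _ => (1 : ℝ)) ⟨?_, ?_⟩
    · rw [Module.End.mem_eigenspace_iff, Matrix.toLin'_apply, hrow]
      ext
      simp
    · obtain ⟨x⟩ := ‹Nonempty X›
      exact fun h => one_ne_zero (congrFun h x)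
  obtain ⟨q, hq⟩ := dvd_iff_isRoot.2 hroot
  have hq0 : q ≠ 0 := by
    rintro rfl
    exact minpoly.ne_zero hBint (by simpa using hq)
  have hM0 : aeval B q ≠ 0 := by
    intro h
    have h1 := minpoly.min ℝ B (p := q * C q.leadingCoeff⁻¹)
      (monic_mul_leadingCoeff_inv hq0) (by simp [h])
    rw [degree_mul_leadingCoeff_inv _ hq0, hq, degree_mul, degree_X_sub_C,
      degree_eq_natDegree hq0] at h1
    have h2 : 1 + q.natDegree ≤ q.natDegree := by exact_mod_cast h1
    omega
  have hz : aeval B ((Polynomial.X - C k) * q) = 0 := by rw [← hq, minpoly.aeval]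
  have hz' : aeval B (q * (Polynomial.X - C k)) = 0 := by rw [mul_comm, hz]
  have hl : B * aeval B q = k • aeval B q := by
    simpa [sub_mul, sub_eq_zero, Algebra.algebraMap_eq_smul_one] using hz
  have hr : aeval B q * B = k • aeval B q := by
    simpa [mul_sub, sub_eq_zero, Algebra.algebraMap_eq_smul_one] using hz'
  have hcol : ∀ x x' y, aeval B q x y = aeval B q x' y := fun x x' y =>
    eigenvector_const B k hB hcard (fun z => aeval B q z y)
      (fun z => by simpa [Matrix.mul_apply] using congrFun (congrFun hl z) y) x x'
  have hrw : ∀ x y y', aeval B q x y = aeval B q x y' := fun x y y' =>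
    eigenvector_const Bᵀ k (fun a b => by simpa [add_comm] using hB a b) hcard
      (fun z => aeval B q x z)
      (fun z => by simpa [Matrix.mul_apply, mul_comm] using congrFun (congrFun hr x) z) y y'
  obtain ⟨o⟩ := ‹Nonempty X›
  have hconst : ∀ x y, aeval B q x y = aeval B q o o := fun x y =>
    (hcol x o y).trans (hrw o y o)
  have hc : aeval B q o o ≠ 0 := by
    intro h
    apply hM0
    ext x y
    rw [hconst, h, Matrix.zero_apply]
  refine ⟨C (aeval B q o o)⁻¹ * q, ?_⟩
  ext x y
  rw [← smul_eq_C_mul, map_smul, Matrix.smul_apply, smul_eq_mul, hconst x y]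
  exact inv_mul_cancel₀ hc

/-- If `Γ` has diameter `2`, `Aᵀ = A₂`, and `A·𝟙 = k·𝟙 = A₂·𝟙` for a positive integer `k`,
then `A₂` is a real polynomial in `A`. -/
theorem stmt2 {X : Type*} [Fintype X] [DecidableEq X] [Nonempty X] (A : Matrix X X ℂ)
    (h01 : ∀ x y : X, A x y = 0 ∨ A x y = 1)
    (hdiag : ∀ x : X, A x x = 0)
    (hconn : ∀ x y : X, ∃ n : ℕ, (A ^ n) x y ≠ 0)
    (hdiam : gdiam A = 2)
    (htrans : Aᵀ = dmat A 2)
    (k : ℕ) (hk : 0 < k)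
    (hreg : A.mulVec (fun _ => (1 : ℂ)) = fun _ => (k : ℂ))
    (hreg2 : (dmat A 2).mulVec (fun _ => (1 : ℂ)) = fun _ => (k : ℂ)) :
    ∃ p : Polynomial ℝ, dmat A 2 = aeval A (p.map (algebraMap ℝ ℂ)) := by
  have htour := tournament A h01 (fun x y => by convert hconn x y) hdiam htrans
  have hcardC : (Fintype.card X : ℂ) = 2 * k + 1 := by
    obtain ⟨o⟩ := ‹Nonempty X›
    have h1 : ∑ y, A o y = k := by simpa [Matrix.mulVec, dotProduct] using congrFun hreg o
    have h2 : ∑ y, A y o = k := by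
      rw [← htrans] at hreg2
      simpa [Matrix.mulVec, dotProduct] using congrFun hreg2 o
    have h3 : ∑ y, (A o y + A y o) = ∑ y, (1 - if o = y then (1 : ℂ) else 0) := by
      refine Finset.sum_congr rfl fun y _ => ?_
      split_ifs with h
      · subst h
        simp [hdiag]
      · simpa using htour o y h
    rw [Finset.sum_add_distrib, h1, h2] at h3
    simp at h3
    linear_combination -h3
  have hcard : (Fintype.card X : ℝ) = 2 * (k : ℝ) + 1 := by exact_mod_cast hcardC
  have hre : ∀ x y, (((A x y).re : ℝ) : ℂ) = A x y := fun x y => by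
    rcases h01 x y with h | h <;> simp [h]
  -- The real form of `A`, to which the Cauchy-Schwarz argument applies.
  let B : Matrix X X ℝ := A.map Complex.re
  have hBA : Complex.ofRealAm.mapMatrix B = A := by
    ext x y
    exact hre x y
  obtain ⟨p, hp⟩ := hoffman B k
    (fun x y => by
      by_cases h : x = y
      · subst h
        simp [B, hdiag]
      · simpa [B, h] using congrArg Complex.re (htour x y h))
    hcard
    (by
      ext x
      simpa [B, Matrix.mulVec, dotProduct] using congrArg Complex.re (congrFun hreg x))
  have hJ : aeval A p = Matrix.of fun _ _ => (1 : ℂ) := by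
    rw [← hBA, aeval_algHom_apply, hp]
    ext x y
    simp
  refine ⟨p - 1 - Polynomial.X, ?_⟩
  rw [← htrans, aeval_map_algebraMap, map_sub, map_sub, hJ, map_one, aeval_X]
  ext x y
  by_cases h : x = y
  · subst h
    simp [hdiag]
  · simp only [Matrix.transpose_apply, Matrix.sub_apply, Matrix.of_apply, Matrix.one_apply_ne h]
    linear_combination htour x y h
end

section
/- Let Γ be a distance-regular digraph. Fix 0 ≤ i ≤ D, a vertex x ∈ X and a vertex y ∈ Γ_i→(x), and set h = ∂(y,x). Then ∂(z,x) = h for every z ∈ Γ_i→(x). -/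
/-!
The distance partition around `x` is equitable for out-neighbours, so by induction on `n` the
number `(A ^ n) y x` of walks of length `n` from `y` to `x` depends only on `∂(x, y)`
(`pow_apply_eq`): the first step of such a walk enters each sphere `Γ_j→(x)` in `dOut i j` ways,
where `i = ∂(x, y)`. Since `∂(y, x)` is the least `n` for which this number is nonzero, it is
constant on `Γ_i→(x)`.
-/


open Matrix Polynomial BigOperators
open scoped Classical

/-- `Γ = Γ(A)` is a distance-regular digraph: the out-distance partition around every
vertex is equitable with parameters independent of the vertex. -/
def IsDRD {X : Type*} [Fintype X] (A : Matrix X X ℂ) (D : ℕ) : Prop :=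
  ∃ dOut dIn : ℕ → ℕ → ℕ, ∀ x : X, ∀ i, i ≤ D → ∀ j, j ≤ D → ∀ y : X, gdist A x y = i →
    (Finset.univ.filter fun z : X => gdist A y z = 1 ∧ gdist A x z = j).card = dOut i j ∧
    (Finset.univ.filter fun z : X => gdist A z y = 1 ∧ gdist A x z = j).card = dIn i j

/-- Strong connectedness at the pair `(x, y)` excludes the junk value `sInf ∅ = 0`. -/
lemma gdist_eq_zero_iff {X : Type*} [Fintype X] (A : Matrix X X ℂ) (x y : X)
    (hxy : ∃ n : ℕ, (A ^ n) x y ≠ 0) : gdist A x y = 0 ↔ y = x := by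
  constructor
  · intro h
    have hmem : gdist A x y ∈ {n : ℕ | (A ^ n) x y ≠ 0} := Nat.sInf_mem hxy
    rw [h, Set.mem_ofPred_eq, pow_zero] at hmem
    by_contra hne
    exact hmem (Matrix.one_apply_ne (Ne.symm hne))
  · rintro rfl
    exact Nat.sInf_eq_zero.2 (Or.inl (by simp))

lemma gdist_eq_one_iff {X : Type*} [Fintype X] (A : Matrix X X ℂ)
    (hdiag : ∀ x : X, A x x = 0) (x y : X) : gdist A x y = 1 ↔ A x y ≠ 0 := by
  constructor
  · intro h
    have hmem : gdist A x y ∈ {n : ℕ | (A ^ n) x y ≠ 0} :=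
      Nat.sInf_mem (Nat.nonempty_of_pos_sInf (by change 0 < gdist A x y; omega))
    rw [h] at hmem
    simpa using hmem
  · intro h
    have hne : x ≠ y := by
      rintro rfl
      exact h (hdiag x)
    have hle : gdist A x y ≤ 1 := Nat.sInf_le (by simpa using h)
    have h0 : gdist A x y ≠ 0 := by
      intro h0
      exact hne ((gdist_eq_zero_iff A x y ⟨1, by simpa using h⟩).1 h0).symm
    omega

lemma gdist_le_gdiam {X : Type*} [Fintype X] (A : Matrix X X ℂ) (x y : X) :
    gdist A x y ≤ gdiam A :=
  Finset.le_sup (f := fun p : X × X => gdist A p.1 p.2) (Finset.mem_univ (x, y))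

/-- Number of walks of length `n` from a vertex of `Γ_i→(x)` to `x`, computed from the
out-parameters `d i j = d→_{ij}` of a digraph of diameter `D`. -/
noncomputable def walkCount (d : ℕ → ℕ → ℕ) (D : ℕ) : ℕ → ℕ → ℂ
  | 0, i => if i = 0 then 1 else 0
  | n + 1, i => ∑ j ∈ Finset.range (D + 1), (d i j : ℂ) * walkCount d D n j

lemma pow_apply_eq {X : Type*} [Fintype X] (A : Matrix X X ℂ)
    (h01 : ∀ x y : X, A x y = 0 ∨ A x y = 1)
    (hdiag : ∀ x : X, A x x = 0)
    (hconn : ∀ x y : X, ∃ n : ℕ, (A ^ n) x y ≠ 0)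
    (d : ℕ → ℕ → ℕ) (x : X)
    (hd : ∀ y : X, ∀ j, j ≤ gdiam A →
      (Finset.univ.filter fun z : X => gdist A y z = 1 ∧ gdist A x z = j).card
        = d (gdist A x y) j)
    (n : ℕ) (y : X) : (A ^ n) y x = walkCount d (gdiam A) n (gdist A x y) := by
  induction n generalizing y with
  | zero =>
    rw [pow_zero, walkCount, Matrix.one_apply]
    simp only [gdist_eq_zero_iff A x y (hconn x y)]
  | succ n ih =>
    have hA : ∀ w, A y w = if gdist A y w = 1 then 1 else 0 := by
      intro w
      simp only [gdist_eq_one_iff A hdiag]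
      rcases h01 y w with h | h <;> simp [h]
    rw [pow_succ', Matrix.mul_apply, walkCount,
      ← Finset.sum_fiberwise_of_maps_to (t := Finset.range (gdiam A + 1))
        (g := fun w => gdist A x w)
        (fun w _ => Finset.mem_range.2 (Nat.lt_succ_of_le (gdist_le_gdiam A x w)))]
    refine Finset.sum_congr rfl fun j hj => ?_
    rw [← hd y j (Nat.le_of_lt_succ (Finset.mem_range.1 hj)), ← nsmul_eq_mul,
      ← Finset.sum_const, Finset.sum_filter, Finset.sum_filter]
    refine Finset.sum_congr rfl fun w _ => ?_
    rw [ih w, hA w]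
    by_cases h1 : gdist A y w = 1 <;> by_cases h2 : gdist A x w = j <;> simp [h1, h2]

/-- In a distance-regular digraph, all vertices of `Γ_i→(x)` are at the same
distance back to `x`. -/
theorem stmt6 {X : Type*} [Fintype X] [DecidableEq X] [Nonempty X] (A : Matrix X X ℂ)
    (h01 : ∀ x y : X, A x y = 0 ∨ A x y = 1)
    (hdiag : ∀ x : X, A x x = 0)
    (hconn : ∀ x y : X, ∃ n : ℕ, (A ^ n) x y ≠ 0)
    (D : ℕ) (hD : D = gdiam A)
    (hdrd : IsDRD A D)
    (i : ℕ) (hi : i ≤ D) (x y : X) (hy : gdist A x y = i)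
    (z : X) (hz : gdist A x z = i) :
    gdist A z x = gdist A y x := by
  obtain ⟨dOut, dIn, hdeg⟩ := hdrd
  subst hD
  -- `gdist` forms matrix powers with the classical `DecidableEq` instance, which need not be
  -- definitionally the one in `hconn`.
  obtain rfl : ‹DecidableEq X› = fun a b => Classical.propDecidable (a = b) :=
    Subsingleton.elim _ _
  have key := pow_apply_eq A h01 hdiag hconn dOut x
    fun w j hj => (hdeg x _ (gdist_le_gdiam A x w) j hj w rfl).1
  unfold gdist at hy hz ⊢
  simp only [key]
  unfold gdist
  rw [hy, hz]
end
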